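/- Conjugation symmetry of the kernel (Lemma 4.4): for every μ ∈ ℂ with Im μ < 0 and all network points (j,x), (k,x'), one has K((j,x),(k,x'), conj(μ)) = conj( K((j,x),(k,x'), μ) ), where the kernel at conj(μ) (which has positive imaginary part) is formed with the '+' quantities F^{+,·} and w⁺, and the kernel at μ with the '−' quantities. -/

import Mathlib

noncomputable section

/-- `ξ_k(μ) = √((μ−a_k)/c_k)` for complex `μ`, with the principal square root
(argument in `(−π, π]`). -/
def xiC {m : ℕ} (a c : Fin (m + 2) → ℝ) (μ : ℂ) (k : Fin (m + 2)) : ℂ :=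
  ((μ - (a k : ℂ)) / (c k : ℂ)) ^ ((1 : ℂ) / 2)

/-- The Wronskian `w(μ) = −i·Σ_k c_k·ξ_k(μ)` (the `−` branch, for `Im μ < 0`). -/
def wC {m : ℕ} (a c : Fin (m + 2) → ℝ) (μ : ℂ) : ℂ :=
  -Complex.I * ∑ k, (c k : ℂ) * xiC a c μ k

/-- `s_j(μ) = −(Σ_{l≠j} c_l·ξ_l(μ))/(c_j·ξ_j(μ))`. -/
def sC {m : ℕ} (a c : Fin (m + 2) → ℝ) (μ : ℂ) (j : Fin (m + 2)) : ℂ :=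
  -(∑ l ∈ Finset.univ.erase j, (c l : ℂ) * xiC a c μ l) / ((c j : ℂ) * xiC a c μ j)

/-- `FC a c μ j k x` is the `k`-th component `F_{μ,k}^{−,j}(x)` of the generalized
eigenfunction `F_μ^{−,j}` (the `−` branch, for `Im μ < 0`). -/
def FC {m : ℕ} (a c : Fin (m + 2) → ℝ) (μ : ℂ) (j k : Fin (m + 2)) (x : ℝ) : ℂ :=
  if k = j then
    Complex.cos (xiC a c μ j * x) - Complex.I * sC a c μ j * Complex.sin (xiC a c μ j * x)
  else Complex.exp (-Complex.I * xiC a c μ k * x)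

/-- The resolvent kernel `K((j,x),(k,x'),μ)` for `Im μ < 0` (the `−` branch):
`(1/w(μ))·F_{μ,j}^{−,j}(x)·F_{μ,j}^{−,j+1}(x')` if `k = j` and `x' > x`, and
`(1/w(μ))·F_{μ,j}^{−,j+1}(x)·F_{μ,k}^{−,j}(x')` otherwise; indices modulo `n`. -/
def KC {m : ℕ} (a c : Fin (m + 2) → ℝ) (μ : ℂ) (j : Fin (m + 2)) (x : ℝ)
    (k : Fin (m + 2)) (x' : ℝ) : ℂ :=
  if k = j ∧ x < x' then (1 / wC a c μ) * FC a c μ j j x * FC a c μ (j + 1) j x'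
  else (1 / wC a c μ) * FC a c μ (j + 1) j x * FC a c μ j k x'


/-- The `+`-Wronskian `w⁺(μ) = +i·Σ_k c_k·ξ_k(μ)` (for `Im μ > 0`). -/
def wCp {m : ℕ} (a c : Fin (m + 2) → ℝ) (μ : ℂ) : ℂ :=
  Complex.I * ∑ k, (c k : ℂ) * xiC a c μ k

/-- `FCp a c μ j k x` is the `k`-th component `F_{μ,k}^{+,j}(x)` of the generalized
eigenfunction `F_μ^{+,j}` (the `+` branch, for `Im μ > 0`). -/
def FCp {m : ℕ} (a c : Fin (m + 2) → ℝ) (μ : ℂ) (j k : Fin (m + 2)) (x : ℝ) : ℂ :=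
  if k = j then
    Complex.cos (xiC a c μ j * x) + Complex.I * sC a c μ j * Complex.sin (xiC a c μ j * x)
  else Complex.exp (Complex.I * xiC a c μ k * x)

/-- The resolvent kernel `K((j,x),(k,x'),μ)` for `Im μ > 0`, formed with the `+` quantities. -/
def KCp {m : ℕ} (a c : Fin (m + 2) → ℝ) (μ : ℂ) (j : Fin (m + 2)) (x : ℝ)
    (k : Fin (m + 2)) (x' : ℝ) : ℂ :=
  if k = j ∧ x < x' then (1 / wCp a c μ) * FCp a c μ j j x * FCp a c μ (j + 1) j x'
  else (1 / wCp a c μ) * FCp a c μ (j + 1) j x * FCp a c μ j k x'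

end

/-! Each `+` quantity is obtained from the corresponding `−` quantity by conjugating its explicit
coefficients, that is, by replacing `-i` with `i`. So the symmetry reduces to
`ξ_k (conj μ) = conj (ξ_k μ)`, which holds because the principal square root commutes with
conjugation away from its branch cut. -/

section ConjugationSymmetry

open Complex ComplexConjugate

theorem sub_div_ofReal_mem_slitPlane {μ : ℂ} (hμ : μ.im ≠ 0) (a : ℝ) {c : ℝ} (hc : c ≠ 0) :
    (μ - a) / c ∈ slitPlane := by
  refine mem_slitPlane_iff.mpr (Or.inr ?_)
  rw [div_ofReal_im, sub_im, ofReal_im, sub_zero]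
  exact div_ne_zero hμ hc

variable {m : ℕ} {a c : Fin (m + 2) → ℝ} {μ : ℂ}

theorem xiC_conj {k : Fin (m + 2)} (h : (μ - a k) / c k ∈ slitPlane) :
    xiC a c (conj μ) k = conj (xiC a c μ k) := by
  have conj_half : conj ((1 : ℂ) / 2) = 1 / 2 := by
    rw [map_div₀, map_one, map_ofNat]
  have conj_radicand : (conj μ - a k) / c k = conj ((μ - a k) / c k) := by
    simp only [map_div₀, map_sub, conj_ofReal]
  rw [xiC, xiC, conj_radicand, conj_cpow _ _ (slitPlane_arg_ne_pi h), conj_half]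

theorem wCp_conj (h : ∀ k, (μ - a k) / c k ∈ slitPlane) :
    wCp a c (conj μ) = conj (wC a c μ) := by
  simp only [wCp, wC, xiC_conj (h _), map_mul, map_neg, map_sum, conj_I, conj_ofReal, neg_neg]

theorem sC_conj (h : ∀ k, (μ - a k) / c k ∈ slitPlane) (j : Fin (m + 2)) :
    sC a c (conj μ) j = conj (sC a c μ j) := by
  simp only [sC, xiC_conj (h _), map_div₀, map_neg, map_sum, map_mul, conj_ofReal]

theorem FCp_conj (h : ∀ k, (μ - a k) / c k ∈ slitPlane) (j k : Fin (m + 2)) (x : ℝ) :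
    FCp a c (conj μ) j k x = conj (FC a c μ j k x) := by
  unfold FCp FC
  split_ifs
  · simp only [xiC_conj (h _), sC_conj h, map_sub, map_mul, conj_I, ← cos_conj, ← sin_conj,
      conj_ofReal, neg_mul, sub_neg_eq_add]
  · simp only [xiC_conj (h _), ← exp_conj, map_mul, map_neg, conj_I, conj_ofReal, neg_neg]

theorem statement10_general (h : ∀ k, (μ - a k) / c k ∈ slitPlane)
    (j k : Fin (m + 2)) (x x' : ℝ) :
    KCp a c (conj μ) j x k x' = conj (KC a c μ j x k x') := by
  unfold KCp KC
  split_ifs <;> simp only [wCp_conj h, FCp_conj h, map_mul, map_div₀, map_one]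

end ConjugationSymmetry

/-- Lemma 4.4, conjugation symmetry of the kernel: for every `μ ∈ ℂ` with
`Im μ < 0` and all network points `(j,x)`, `(k,x')`,
`K((j,x),(k,x'),conj μ) = conj(K((j,x),(k,x'),μ))`, where the kernel at `conj μ` (which has
positive imaginary part) is formed with the `+` quantities and the kernel at `μ` with the `−`
quantities. -/
theorem statement10 (m : ℕ) (a c : Fin (m + 2) → ℝ) (ha : Monotone a) (hc : ∀ k, 0 < c k)
    (μ : ℂ) (hμ : μ.im < 0)
    (j k : Fin (m + 2)) (x x' : ℝ) (hx : 0 ≤ x) (hx' : 0 ≤ x') :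
    KCp a c ((starRingEnd ℂ) μ) j x k x' = (starRingEnd ℂ) (KC a c μ j x k x') :=
  statement10_general (fun k => sub_div_ofReal_mem_slitPlane hμ.ne (a k) (hc k).ne') j k x x'
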